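/- arXiv:1506.04036 — 3 statements merged into one kernel-verified Lean document; each statement's English description precedes it below -/
import Mathlib

section
/- Let C ⊆ F_{q^m}^n be an F_{q^m}-linear code of dimension k with full-rank generator matrix G ∈ F_{q^m}^{k×n} (the rows of G form a basis of C), and let 1 ≤ r ≤ k. For each F_{q^m}-subspace U ⊆ F_{q^m}^k define L^G_U = { x ∈ F_q^n : G x^T ∈ U }, an F_q-subspace of F_q^n. Then d_{R,r}(C) = n − max{ dim_{F_q} L^G_U : U ⊆ F_{q^m}^k, dim_{F_{q^m}} U = k − r }. -/
open Submodule Module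

namespace RankPaper

variable {n : ℕ}

/-- The coordinatewise `q^i`-th power map on `Fqm^n`. -/
def qpowMap (q i : ℕ) {Fqm : Type} [Field Fqm] (v : Fin n → Fqm) : Fin n → Fqm :=
  fun j => v j ^ q ^ i

/-- The Galois closure `D* = Σ_{i=0}^{m-1} D^{q^i}` of a subspace (as the span of the
union of the images of `D` under the coordinatewise `q^i`-power maps, `0 ≤ i < m`). -/
def galClosure (q m : ℕ) {Fqm : Type} [Field Fqm] (D : Submodule Fqm (Fin n → Fqm)) :
    Submodule Fqm (Fin n → Fqm) :=
  Submodule.span Fqm (⋃ i ∈ Finset.range m, qpowMap q i '' (D : Set (Fin n → Fqm)))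

/-- `D` is Galois closed if `D = D*`. -/
def GaloisClosed (q m : ℕ) {Fqm : Type} [Field Fqm] (D : Submodule Fqm (Fin n → Fqm)) : Prop :=
  galClosure q m D = D

/-- Rank weight of a subspace: `wt_R(D) = dim_{Fqm} D*`. -/
noncomputable def wtR (q m : ℕ) {Fqm : Type} [Field Fqm]
    (D : Submodule Fqm (Fin n → Fqm)) : ℕ :=
  finrank Fqm (galClosure q m D)

/-- Rank weight of a vector: `wt_R(c) = wt_R(span {c})`. -/
noncomputable def wtRv (q m : ℕ) {Fqm : Type} [Field Fqm] (c : Fin n → Fqm) : ℕ :=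
  wtR q m (Submodule.span Fqm ({c} : Set (Fin n → Fqm)))

/-- Hamming weight of a subspace: the number of coordinates where some element is nonzero. -/
noncomputable def wtH {Fqm : Type} [Field Fqm] (D : Submodule Fqm (Fin n → Fqm)) : ℕ :=
  {i : Fin n | ∃ d ∈ D, d i ≠ 0}.ncard

/-- `r`-th generalized rank weight of a linear code. -/
noncomputable def dR (q m : ℕ) {Fqm : Type} [Field Fqm]
    (C : Submodule Fqm (Fin n → Fqm)) (r : ℕ) : ℕ :=
  sInf { dv | ∃ V : Submodule Fqm (Fin n → Fqm),
    GaloisClosed q m V ∧ r ≤ finrank Fqm ↥(C ⊓ V) ∧ dv = finrank Fqm ↥V }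

/-- `r`-th generalized Hamming weight of a linear code. -/
noncomputable def dH {Fqm : Type} [Field Fqm]
    (C : Submodule Fqm (Fin n → Fqm)) (r : ℕ) : ℕ :=
  sInf { w | ∃ D : Submodule Fqm (Fin n → Fqm), D ≤ C ∧ finrank Fqm ↥D = r ∧ w = wtH D }

/-- `r`-th relative generalized rank weight of a nested code pair. -/
noncomputable def MR (q m : ℕ) {Fqm : Type} [Field Fqm]
    (C₁ C₂ : Submodule Fqm (Fin n → Fqm)) (r : ℕ) : ℕ :=
  sInf { dv | ∃ V : Submodule Fqm (Fin n → Fqm), GaloisClosed q m V ∧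
    r ≤ finrank Fqm ↥(C₁ ⊓ V) - finrank Fqm ↥(C₂ ⊓ V) ∧ dv = finrank Fqm ↥V }

/-- Minimum rank distance of an arbitrary (possibly nonlinear) code. -/
noncomputable def dRset (q m : ℕ) {Fqm : Type} [Field Fqm] (C : Set (Fin n → Fqm)) : ℕ :=
  sInf { w | ∃ c₁ ∈ C, ∃ c₂ ∈ C, c₁ ≠ c₂ ∧ w = wtRv q m (c₁ - c₂) }

/-- The linear functional `x ↦ Σ_j x_j y_j` (dot product with `y`). -/
def dotLin {K : Type} [Field K] (y : Fin n → K) : (Fin n → K) →ₗ[K] K :=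
  ∑ j, y j • LinearMap.proj j

/-- Orthogonal complement of a subspace with respect to the standard bilinear form. -/
def perp {K : Type} [Field K] (L : Submodule K (Fin n → K)) : Submodule K (Fin n → K) :=
  ⨅ y ∈ L, LinearMap.ker (dotLin y)

/-- The coordinatewise inclusion `Fq^n → Fqm^n`. -/
def embFq (Fq Fqm : Type) [Field Fq] [Field Fqm] [Algebra Fq Fqm] :
    (Fin n → Fq) →ₗ[Fq] (Fin n → Fqm) :=
  LinearMap.pi fun j => (Algebra.linearMap Fq Fqm).comp (LinearMap.proj j)

/-- `V_L = L ⊗ Fqm`, the `Fqm`-span of `L ⊆ Fq^n` inside `Fqm^n`. -/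
def VL {Fq : Type} (Fqm : Type) [Field Fq] [Field Fqm] [Algebra Fq Fqm]
    (L : Submodule Fq (Fin n → Fq)) : Submodule Fqm (Fin n → Fqm) :=
  Submodule.span Fqm (embFq Fq Fqm '' (L : Set (Fin n → Fq)))

/-- Rank-punctured code `C^L`: the image of `C` in `Fqm^n / V_{L^⊥}`. -/
noncomputable def punct {Fq Fqm : Type} [Field Fq] [Field Fqm] [Algebra Fq Fqm]
    (L : Submodule Fq (Fin n → Fq)) (C : Submodule Fqm (Fin n → Fqm)) :
    Submodule Fqm ((Fin n → Fqm) ⧸ VL Fqm (perp L)) :=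
  Submodule.map (VL Fqm (perp L)).mkQ C


/-- The `Fq`-linear map `Fq^n → Fqm^k`, `x ↦ G xᵀ`. -/
noncomputable def liftG {Fq Fqm : Type} [Field Fq] [Field Fqm] [Algebra Fq Fqm] {k : ℕ}
    (G : Matrix (Fin k) (Fin n) Fqm) : (Fin n → Fq) →ₗ[Fq] (Fin k → Fqm) :=
  ((Matrix.mulVecLin G).restrictScalars Fq).comp (embFq Fq Fqm)

/-- Orthogonal complement. -/
def orthC {K : Type} [Field K] {l : ℕ} (V : Submodule K (Fin l → K)) :
    Submodule K (Fin l → K) :=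
  (V.map (dotProductEquiv K (Fin l)).toLinearMap).dualCoannihilator

lemma mem_orthC {K : Type} [Field K] {l : ℕ} {V : Submodule K (Fin l → K)} {x : Fin l → K} :
    x ∈ orthC V ↔ ∀ v ∈ V, dotProduct v x = 0 := by
  unfold orthC
  rw [Submodule.mem_dualCoannihilator]
  constructor
  · intro h v hv
    exact h _ ⟨v, hv, rfl⟩
  · rintro h _ ⟨v, hv, rfl⟩
    exact h v hv

lemma finrank_orthC {K : Type} [Field K] {l : ℕ} (V : Submodule K (Fin l → K)) :
    finrank K V + finrank K (orthC V) = l := by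
  have h := Subspace.finrank_add_finrank_dualCoannihilator_eq
    (V.map (dotProductEquiv K (Fin l)).toLinearMap)
  rw [LinearEquiv.finrank_map_eq] at h
  rwa [finrank_fin_fun] at h

lemma exists_le_finrank {K M : Type} [Field K] [AddCommGroup M] [Module K M]
    [FiniteDimensional K M] (A : Submodule K M) (r : ℕ) (h : r ≤ finrank K A) :
    ∃ B : Submodule K M, B ≤ A ∧ finrank K B = r := by
  obtain ⟨f, hf⟩ := exists_linearIndependent_of_le_finrank h
  have hf' : LinearIndependent K (fun i => (f i : M)) :=
    hf.map' A.subtype (Submodule.ker_subtype A)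
  refine ⟨span K (Set.range fun i => (f i : M)), ?_, ?_⟩
  · rw [span_le]
    rintro _ ⟨i, rfl⟩
    exact (f i).2
  · simpa using finrank_span_eq_card hf'

lemma exists_frob (Fq Fqm : Type) [Field Fq] [Field Fqm] [Algebra Fq Fqm] [Finite Fqm] (i : ℕ) :
    ∃ φ : Fqm →ₐ[Fq] Fqm, ∀ x, φ x = x ^ (Nat.card Fq) ^ i := by
  have := Finite.of_injective _ (FaithfulSMul.algebraMap_injective Fq Fqm)
  have := Fintype.ofFinite Fq
  refine ⟨(FiniteField.frobeniusAlgHom Fq Fqm) ^ i, fun x => ?_⟩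
  induction i with
  | zero => simp
  | succ i ih =>
    rw [pow_succ', AlgHom.mul_apply, ih, FiniteField.frobeniusAlgHom_apply,
      Fintype.card_eq_nat_card, ← pow_mul, pow_succ]

lemma finrank_VL {Fq Fqm : Type} [Field Fq] [Field Fqm] [Algebra Fq Fqm]
    (M : Submodule Fq (Fin n → Fq)) : finrank Fqm (VL Fqm M) = finrank Fq M := by
  let b := finBasis Fq M
  have hb : LinearIndependent Fq (fun i => (b i : Fin n → Fq)) :=
    b.linearIndependent.map' M.subtype (Submodule.ker_subtype M)
  have h2 : LinearIndependent Fqm (fun i => algebraMap Fq Fqm ∘ (b i : Fin n → Fq)) :=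
    linearIndependent_algebraMap_comp_iff.2 hb
  have h3 : VL Fqm M =
      span Fqm (Set.range (fun i => algebraMap Fq Fqm ∘ (b i : Fin n → Fq))) := by
    apply le_antisymm
    · unfold VL
      rw [span_le]
      rintro _ ⟨x, hx, rfl⟩
      have hs := b.sum_repr ⟨x, hx⟩
      have hs' : x = ∑ i, b.repr ⟨x, hx⟩ i • (b i : Fin n → Fq) := by
        have := congrArg (fun y : M => (y : Fin n → Fq)) hs
        refine this.symm.trans ?_
        simp only [Submodule.coe_sum, Submodule.coe_smul]
      rw [hs', map_sum]
      refine Submodule.sum_mem _ fun i _ => ?_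
      rw [map_smul, ← algebraMap_smul Fqm]
      exact Submodule.smul_mem _ _ (subset_span ⟨i, rfl⟩)
    · rw [span_le]
      rintro _ ⟨i, rfl⟩
      exact subset_span ⟨b i, (b i).2, rfl⟩
  rw [h3, finrank_span_eq_card h2]
  simp

lemma mem_orthC_VL {Fq Fqm : Type} [Field Fq] [Field Fqm] [Algebra Fq Fqm]
    {M : Submodule Fq (Fin n → Fq)} {w : Fin n → Fqm} :
    w ∈ orthC (VL Fqm M) ↔ ∀ x ∈ M, dotProduct (embFq Fq Fqm x) w = 0 := by
  rw [mem_orthC]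
  constructor
  · intro h x hx
    exact h _ (subset_span ⟨x, hx, rfl⟩)
  · intro h v hv
    induction hv using Submodule.span_induction with
    | mem v hv => obtain ⟨x, hx, rfl⟩ := hv; exact h x hx
    | zero => simp
    | add a b _ _ ha hb => rw [add_dotProduct, ha, hb, add_zero]
    | smul c a _ ha => rw [smul_dotProduct, ha, smul_zero]

lemma galoisClosed_orthC_VL {Fq Fqm : Type} [Field Fq] [Field Fqm] [Algebra Fq Fqm] [Finite Fqm]
    (M : Submodule Fq (Fin n → Fq)) :
    GaloisClosed (Nat.card Fq) (finrank Fq Fqm) (orthC (VL Fqm M)) := by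
  apply le_antisymm
  · unfold galClosure
    rw [span_le]
    intro y hy
    simp only [Set.mem_iUnion] at hy
    obtain ⟨i, -, w, hw, rfl⟩ := hy
    obtain ⟨φ, hφ⟩ := exists_frob Fq Fqm i
    rw [SetLike.mem_coe, mem_orthC_VL] at hw ⊢
    intro x hx
    have := congrArg φ (hw x hx)
    simpa [dotProduct, embFq, qpowMap, ← hφ] using this
  · intro w hw
    refine subset_span ?_
    simp only [Set.mem_iUnion]
    refine ⟨0, Finset.mem_range.2 finrank_pos, w, hw, ?_⟩
    funext j
    simp [qpowMap]

/-- Rational points orthogonal to `V`. -/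
lemma exists_rational {Fq Fqm : Type} [Field Fq] [Field Fqm] [Algebra Fq Fqm] [Finite Fqm]
    (V : Submodule Fqm (Fin n → Fqm)) (hV : GaloisClosed (Nat.card Fq) (finrank Fq Fqm) V) :
    ∃ M : Submodule Fq (Fin n → Fq), (∀ x ∈ M, ∀ v ∈ V, dotProduct v (embFq Fq Fqm x) = 0) ∧
      n ≤ finrank Fqm V + finrank Fq M := by
  have := Finite.of_injective _ (FaithfulSMul.algebraMap_injective Fq Fqm)
  have hp : ∀ i < finrank Fq Fqm, ∀ v ∈ V, qpowMap (Nat.card Fq) i v ∈ V := by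
    intro i hi v hv
    have : qpowMap (Nat.card Fq) i v ∈ galClosure (Nat.card Fq) (finrank Fq Fqm) V := by
      refine subset_span ?_
      simp only [Set.mem_iUnion]
      exact ⟨i, Finset.mem_range.2 hi, v, hv, rfl⟩
    rwa [hV] at this
  let M : Submodule Fq (Fin n → Fq) :=
    Submodule.comap (embFq Fq Fqm) ((orthC V).restrictScalars Fq)
  have hM : ∀ x, x ∈ M ↔ ∀ v ∈ V, dotProduct v (embFq Fq Fqm x) = 0 := by
    intro x
    exact mem_orthC
  refine ⟨M, fun x hx => (hM x).1 hx, ?_⟩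
  have hcard : ∀ x : Fqm, x ^ (Nat.card Fq) ^ (finrank Fq Fqm) = x := by
    intro x
    rw [← Module.natCard_eq_pow_finrank]
    have := Fintype.ofFinite Fqm
    rw [Nat.card_eq_fintype_card]
    exact FiniteField.pow_card x
  -- conjugates
  have hconj : ∀ i < finrank Fq Fqm, ∀ v ∈ V, ∀ y ∈ orthC V,
      ∑ j, v j * y j ^ (Nat.card Fq) ^ i = 0 := by
    intro i hi v hv y hy
    obtain ⟨φ, hφ⟩ := exists_frob Fq Fqm i
    have hv' : ∃ v' ∈ V, ∀ j, v' j ^ (Nat.card Fq) ^ i = v j := by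
      rcases Nat.eq_zero_or_pos i with rfl | h0
      · exact ⟨v, hv, by simp⟩
      · refine ⟨_, hp (finrank Fq Fqm - i) (by omega) v hv, fun j => ?_⟩
        simp only [qpowMap]
        rw [← pow_mul, ← pow_add, Nat.sub_add_cancel hi.le, hcard]
    obtain ⟨v', hv'V, hv'⟩ := hv'
    have := congrArg φ (mem_orthC.1 hy v' hv'V)
    rw [map_zero, dotProduct, map_sum] at this
    simpa only [hφ, mul_pow, hv'] using this
  have hle : orthC V ≤ VL Fqm M := by
    intro y hy
    let b := finBasis Fq Fqm
    have htr : ∀ c : Fqm, (fun j => Algebra.trace Fq Fqm (c * y j)) ∈ M := by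
      intro c
      rw [hM]
      intro v hv
      simp only [dotProduct, embFq, LinearMap.pi_apply, LinearMap.comp_apply,
        LinearMap.proj_apply, Algebra.linearMap_apply,
        FiniteField.algebraMap_trace_eq_sum_pow, Finset.mul_sum]
      rw [Finset.sum_comm]
      refine Finset.sum_eq_zero fun i hi => ?_
      have h := hconj i (Finset.mem_range.1 hi) v hv y hy
      calc _ = c ^ (Nat.card Fq) ^ i * ∑ j, v j * y j ^ (Nat.card Fq) ^ i := by
            rw [Finset.mul_sum]
            refine Finset.sum_congr rfl fun j _ => ?_
            ring
        _ = 0 := by rw [h, mul_zero]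
    have hy' : y = ∑ i, b.traceDual i •
        embFq Fq Fqm (fun j => Algebra.trace Fq Fqm (b i * y j)) := by
      funext j
      have := b.traceDual.sum_repr (y j)
      simp only [Finset.sum_apply, Pi.smul_apply, embFq, LinearMap.pi_apply,
        LinearMap.comp_apply, LinearMap.proj_apply, Algebra.linearMap_apply]
      refine this.symm.trans ?_
      refine Finset.sum_congr rfl fun i _ => ?_
      rw [Basis.traceDual_repr_apply, Algebra.traceForm_apply, Algebra.smul_def, smul_eq_mul,
        mul_comm (b i), mul_comm]
    rw [hy']
    exact Submodule.sum_mem _ fun i _ => Submodule.smul_mem _ _ (subset_span ⟨_, htr _, rfl⟩)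
  have h1 := Submodule.finrank_mono hle
  rw [finrank_VL] at h1
  have h2 := finrank_orthC V
  omega

/-- if the rows of `G` form a basis of `C` and `1 ≤ r ≤ k`, then
`d_{R,r}(C) = n − max { dim_{Fq} L^G_U : U ⊆ Fqm^k, dim U = k − r }`, where
`L^G_U = { x ∈ Fq^n : G xᵀ ∈ U }`. -/
theorem stmt3 (q m n k r : ℕ) (Fq Fqm : Type) [Field Fq] [Field Fqm] [Algebra Fq Fqm]
    [Finite Fqm] (hq : Nat.card Fq = q) (hm : finrank Fq Fqm = m)
    (G : Matrix (Fin k) (Fin n) Fqm) (C : Submodule Fqm (Fin n → Fqm))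
    (hGli : LinearIndependent Fqm (fun i : Fin k => G i))
    (hGspan : C = Submodule.span Fqm (Set.range fun i : Fin k => G i))
    (hr1 : 1 ≤ r) (hrk : r ≤ k) :
    dR q m C r = n - sSup { d | ∃ U : Submodule Fqm (Fin k → Fqm),
        finrank Fqm U = k - r ∧
        d = finrank Fq (Submodule.comap (liftG G) (U.restrictScalars Fq)) } := by
  subst hq hm
  have hinj : Function.Injective (Matrix.vecMulLinear G) :=
    Matrix.vecMul_injective_iff.2 hGli
  have hC : C = LinearMap.range (Matrix.vecMulLinear G) := by
    rw [hGspan, range_vecMulLinear]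
    rfl
  have hdot : ∀ (a : Fin k → Fqm) (x : Fin n → Fq),
      dotProduct (Matrix.vecMulLinear G a) (embFq Fq Fqm x) = dotProduct a (liftG G x) := by
    intro a x
    exact (Matrix.dotProduct_mulVec a G _).symm
  set T := { d | ∃ U : Submodule Fqm (Fin k → Fqm),
        finrank Fqm U = k - r ∧
        d = finrank Fq (Submodule.comap (liftG G) (U.restrictScalars Fq)) } with hT
  have hFq := Finite.of_injective _ (FaithfulSMul.algebraMap_injective Fq Fqm)
  have hTb : BddAbove T := by
    refine ⟨n, ?_⟩
    rintro _ ⟨U, -, rfl⟩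
    simpa using Submodule.finrank_le (Submodule.comap (liftG G) (U.restrictScalars Fq))
  have hTne : T.Nonempty := by
    obtain ⟨U, -, hU⟩ := exists_le_finrank (⊤ : Submodule Fqm (Fin k → Fqm)) (k - r) (by simp)
    exact ⟨_, U, hU, rfl⟩
  obtain ⟨U, hU, hUs⟩ := Nat.sSup_mem hTne hTb
  -- the optimal Galois closed space
  have hmem : n - sSup T ∈ { dv | ∃ V : Submodule Fqm (Fin n → Fqm),
      GaloisClosed (Nat.card Fq) (finrank Fq Fqm) V ∧ r ≤ finrank Fqm ↥(C ⊓ V) ∧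
      dv = finrank Fqm ↥V } := by
    refine ⟨orthC (VL Fqm (Submodule.comap (liftG G) (U.restrictScalars Fq))),
      galoisClosed_orthC_VL _, ?_, ?_⟩
    · have h1 := finrank_orthC U
      have h2 : (orthC U).map (Matrix.vecMulLinear G) ≤
          C ⊓ orthC (VL Fqm (Submodule.comap (liftG G) (U.restrictScalars Fq))) := by
        rintro _ ⟨a, ha, rfl⟩
        refine ⟨hC ▸ ⟨a, rfl⟩, ?_⟩
        rw [SetLike.mem_coe, mem_orthC_VL]
        intro x hx
        rw [dotProduct_comm, hdot, dotProduct_comm]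
        exact mem_orthC.1 ha _ hx
      have h3 := Submodule.finrank_mono h2
      rw [← (Submodule.equivMapOfInjective _ hinj (orthC U)).finrank_eq] at h3
      omega
    · have h1 := finrank_orthC (VL Fqm (Submodule.comap (liftG G) (U.restrictScalars Fq)))
      rw [finrank_VL] at h1
      omega
  apply le_antisymm
  · exact Nat.sInf_le hmem
  · refine le_csInf ⟨_, hmem⟩ ?_
    rintro _ ⟨V, hV, hr, rfl⟩
    obtain ⟨M, hM, hMn⟩ := exists_rational V hV
    have hA : r ≤ finrank Fqm (V.comap (Matrix.vecMulLinear G)) := by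
      have : C ⊓ V = (V.comap (Matrix.vecMulLinear G)).map (Matrix.vecMulLinear G) := by
        rw [Submodule.map_comap_eq, hC]
      rw [this] at hr
      exact hr.trans (Submodule.finrank_map_le _ _)
    obtain ⟨B, hBA, hB⟩ := exists_le_finrank _ r hA
    have h1 := finrank_orthC B
    have h2 : M ≤ Submodule.comap (liftG G) ((orthC B).restrictScalars Fq) := by
      intro x hx
      change liftG G x ∈ orthC B
      rw [mem_orthC]
      intro a ha
      rw [← hdot]
      exact hM x hx _ (hBA ha)
    have h3 := Submodule.finrank_mono h2
    have h4 := le_csSup hTb ⟨orthC B, by omega, rfl⟩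
    omega

end RankPaper
end

section
/- Let C ⊆ F_{q^m}^n be an F_{q^m}-linear code of dimension k and n' a positive integer. Then the following holds if and only if n' ≥ d_{R,k}(C): there exist an F_{q^m}-linear code C' ⊆ F_{q^m}^{n'}, Galois closed subspaces V ⊆ F_{q^m}^n with C ⊆ V and V' ⊆ F_{q^m}^{n'} with C' ⊆ V', and an F_{q^m}-linear isomorphism φ : V → V' such that φ(C) = C' and wt_R(φ(v)) = wt_R(v) for all v ∈ V. -/
open Submodule Module

namespace RankPaper

variable {n : ℕ}

/-- The `q^i`-power map is an `Fq`-algebra endomorphism. -/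
theorem exists_powHom (q i : ℕ) (Fq Fqm : Type) [Field Fq] [Field Fqm] [Algebra Fq Fqm]
    [Finite Fqm] (hq : Nat.card Fq = q) :
    ∃ s : Fqm →ₐ[Fq] Fqm, ∀ x, s x = x ^ q ^ i := by
  have : Finite Fq := Finite.of_injective _ (algebraMap Fq Fqm).injective
  have := Fintype.ofFinite Fq
  subst hq
  refine ⟨(FiniteField.frobeniusAlgHom Fq Fqm) ^ i, fun x => ?_⟩
  rw [AlgHom.coe_pow, FiniteField.coe_frobeniusAlgHom, pow_iterate, Nat.card_eq_fintype_card]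

/-- The Galois closure of the line spanned by `v`. -/
theorem galClosure_span (q m : ℕ) {Fqm : Type} [Field Fqm] (v : Fin n → Fqm) :
    galClosure q m (Submodule.span Fqm {v}) =
      Submodule.span Fqm ((fun i => qpowMap q i v) '' (Finset.range m : Set ℕ)) := by
  unfold galClosure
  apply le_antisymm
  · rw [Submodule.span_le]
    intro x hx
    simp only [Set.mem_iUnion] at hx
    obtain ⟨i, hi, d, hd, rfl⟩ := hx
    obtain ⟨a, rfl⟩ := Submodule.mem_span_singleton.1 hd
    have : qpowMap q i (a • v) = (a ^ q ^ i) • qpowMap q i v := by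
      ext j; simp [qpowMap, mul_pow]
    rw [this]
    exact Submodule.smul_mem _ _ (Submodule.subset_span ⟨i, hi, rfl⟩)
  · rw [Submodule.span_le]
    rintro _ ⟨i, hi, rfl⟩
    refine Submodule.subset_span ?_
    simp only [Set.mem_iUnion]
    exact ⟨i, hi, v, Submodule.mem_span_singleton_self v, rfl⟩

/-- Injective linear maps commuting with the power maps preserve rank weights. -/
theorem wtRv_map (q m : ℕ) {Fqm : Type} [Field Fqm] {d : ℕ}
    (A : (Fin d → Fqm) →ₗ[Fqm] (Fin n → Fqm)) (hA : Function.Injective A)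
    (h : ∀ i x, A (qpowMap q i x) = qpowMap q i (A x)) (x : Fin d → Fqm) :
    wtRv q m (A x) = wtRv q m x := by
  unfold wtRv wtR
  rw [galClosure_span, galClosure_span]
  have : (fun i => qpowMap q i (A x)) '' (Finset.range m : Set ℕ) =
      A '' ((fun i => qpowMap q i x) '' (Finset.range m : Set ℕ)) := by
    rw [Set.image_image]
    simp only [h]
  rw [this, ← Submodule.map_span]
  exact ((Submodule.equivMapOfInjective A hA _).finrank_eq).symm

theorem galoisClosed_of (q m : ℕ) (hm : 0 < m) {Fqm : Type} [Field Fqm]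
    (D : Submodule Fqm (Fin n → Fqm)) (h : ∀ i, ∀ x ∈ D, qpowMap q i x ∈ D) :
    GaloisClosed q m D := by
  unfold GaloisClosed galClosure
  apply le_antisymm
  · rw [Submodule.span_le]
    intro x hx
    simp only [Set.mem_iUnion] at hx
    obtain ⟨i, hi, d, hd, rfl⟩ := hx
    exact h i d hd
  · intro x hx
    refine Submodule.subset_span ?_
    simp only [Set.mem_iUnion]
    refine ⟨0, by simpa using hm, x, hx, ?_⟩
    ext j; simp [qpowMap]

/-- The linear combination map of a family with entries in `Fq` commutes with power maps. -/
theorem lc_comm (q i : ℕ) (Fq Fqm : Type) [Field Fq] [Field Fqm] [Algebra Fq Fqm]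
    [Finite Fqm] (hq : Nat.card Fq = q) {d : ℕ} (w : Fin d → Fin n → Fqm)
    (hw : ∀ a j, w a j ∈ Set.range (algebraMap Fq Fqm)) (x : Fin d → Fqm) :
    Fintype.linearCombination Fqm w (qpowMap q i x) =
      qpowMap q i (Fintype.linearCombination Fqm w x) := by
  obtain ⟨s, hs⟩ := exists_powHom q i Fq Fqm hq
  ext j
  simp only [Fintype.linearCombination_apply, qpowMap, Finset.sum_apply, Pi.smul_apply,
    smul_eq_mul, ← hs, map_sum, map_mul]
  refine Finset.sum_congr rfl fun a _ => ?_
  obtain ⟨y, hy⟩ := hw a j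
  rw [← hy, AlgHom.commutes]

/-- Galois descent: a Galois closed space has a basis with entries in `Fq`. -/
theorem descent (q m : ℕ) (Fq Fqm : Type) [Field Fq] [Field Fqm] [Algebra Fq Fqm]
    [Finite Fqm] (hq : Nat.card Fq = q) (hm : finrank Fq Fqm = m)
    (V : Submodule Fqm (Fin n → Fqm)) (hV : GaloisClosed q m V) :
    ∃ w : Fin (finrank Fqm V) → Fin n → Fqm,
      (∀ a j, w a j ∈ Set.range (algebraMap Fq Fqm)) ∧ Submodule.span Fqm (Set.range w) = V ∧
      LinearIndependent Fqm w := by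
  have : Finite Fq := Finite.of_injective _ (algebraMap Fq Fqm).injective
  have : FiniteDimensional Fq Fqm := Module.Finite.of_finite
  set S : Set (Fin n → Fqm) := {v | v ∈ V ∧ ∀ j, v j ∈ Set.range (algebraMap Fq Fqm)} with hS
  have htr : ∀ v ∈ V, (fun j => algebraMap Fq Fqm (Algebra.trace Fq Fqm (v j))) ∈ V := by
    intro v hv
    have : (fun j => algebraMap Fq Fqm (Algebra.trace Fq Fqm (v j))) =
        ∑ i ∈ Finset.range m, qpowMap q i v := by
      ext j
      rw [FiniteField.algebraMap_trace_eq_sum_pow, Finset.sum_apply, hm, hq]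
      rfl
    rw [this]
    refine Submodule.sum_mem _ fun i hi => ?_
    rw [← hV]
    refine Submodule.subset_span ?_
    simp only [Set.mem_iUnion]
    exact ⟨i, hi, v, hv, rfl⟩
  have hspan : Submodule.span Fqm S = V := by
    apply le_antisymm
    · rw [Submodule.span_le]
      exact fun x hx => hx.1
    · intro v hv
      let b := Module.finBasis Fq Fqm
      have : v = ∑ i, b.traceDual i •
          (fun j => algebraMap Fq Fqm (Algebra.trace Fq Fqm ((b i • v) j))) := by
        ext j
        conv_lhs => rw [← b.traceDual.sum_repr (v j)]
        rw [Finset.sum_apply]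
        refine Finset.sum_congr rfl fun i _ => ?_
        rw [Module.Basis.traceDual_repr_apply, Algebra.traceForm_apply, Algebra.smul_def,
          Pi.smul_apply, Pi.smul_apply, smul_eq_mul, smul_eq_mul, mul_comm (v j), mul_comm]
      rw [this]
      refine Submodule.sum_mem _ fun i _ => Submodule.smul_mem _ _ (Submodule.subset_span ?_)
      exact ⟨htr _ (V.smul_mem _ hv), fun j => ⟨_, rfl⟩⟩
  obtain ⟨f, hf, hfs, hli⟩ := Submodule.exists_fun_fin_finrank_span_eq Fqm S
  clear_value S
  subst hspan
  exact ⟨f, fun a j => by have := hf a; rw [hS] at this; exact this.2 j, hfs, hli⟩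

/-- a code of dimension `k` is rank-metric equivalent to a code of
length `n'` if and only if `n' ≥ d_{R,k}(C)`. -/
theorem stmt7 (q m n n' k : ℕ) (Fq Fqm : Type) [Field Fq] [Field Fqm] [Algebra Fq Fqm]
    [Finite Fqm] (hq : Nat.card Fq = q) (hm : finrank Fq Fqm = m) (hn' : 0 < n')
    (C : Submodule Fqm (Fin n → Fqm)) (hk : finrank Fqm C = k) :
    dR q m C k ≤ n' ↔
      ∃ (C' : Submodule Fqm (Fin n' → Fqm)) (V : Submodule Fqm (Fin n → Fqm))
        (V' : Submodule Fqm (Fin n' → Fqm)) (φ : V ≃ₗ[Fqm] V'),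
        GaloisClosed q m V ∧ GaloisClosed q m V' ∧ C ≤ V ∧ C' ≤ V' ∧
        Submodule.map (V'.subtype.comp φ.toLinearMap) (C.comap V.subtype) = C' ∧
        ∀ v : V, wtRv q m ((φ v : Fin n' → Fqm)) = wtRv q m (v : Fin n → Fqm) := by
  have hFq : Finite Fq := Finite.of_injective _ (algebraMap Fq Fqm).injective
  have : FiniteDimensional Fq Fqm := Module.Finite.of_finite
  have hmpos : 0 < m := hm ▸ Module.finrank_pos
  constructor
  · intro h
    have hne : { dv | ∃ V : Submodule Fqm (Fin n → Fqm),
        GaloisClosed q m V ∧ k ≤ finrank Fqm ↥(C ⊓ V) ∧ dv = finrank Fqm ↥V }.Nonempty :=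
      ⟨_, ⊤, galoisClosed_of q m hmpos _ (fun _ _ _ => Submodule.mem_top),
        by rw [inf_top_eq, hk], rfl⟩
    obtain ⟨V, hV, hkV, hdV⟩ := Nat.sInf_mem hne
    change dR q m C k = _ at hdV
    rw [hdV] at h
    have hCV : C ≤ V := by
      have := Submodule.eq_of_le_of_finrank_le (inf_le_left : C ⊓ V ≤ C) (by rw [hk]; exact hkV)
      exact inf_eq_left.1 this
    obtain ⟨w, hw, hws, hwi⟩ := descent q m Fq Fqm hq hm V hV
    let A := Fintype.linearCombination Fqm w
    have hA : Function.Injective A := linearIndependent_iff_injective_fintypeLinearCombination.1 hwi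
    have hAc := fun i => lc_comm q i Fq Fqm hq w hw
    have hAr : LinearMap.range A = V := by
      exact (Fintype.range_linearCombination Fqm w).trans hws
    let e : Fin (finrank Fqm V) → Fin n' → Fqm := fun a => Pi.single (Fin.castLE h a) 1
    have he : ∀ a j, e a j ∈ Set.range (algebraMap Fq Fqm) := by
      intro a j
      by_cases hj : j = Fin.castLE h a
      · subst hj; exact ⟨1, by simp [e]⟩
      · exact ⟨0, by simp [e, hj]⟩
    have hei : LinearIndependent Fqm e :=
      (Pi.linearIndependent_single_one (Fin n') Fqm).comp _ (Fin.castLE_injective h)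
    let B := Fintype.linearCombination Fqm e
    have hB : Function.Injective B := linearIndependent_iff_injective_fintypeLinearCombination.1 hei
    have hBc := fun i => lc_comm q i Fq Fqm hq e he
    let φ : V ≃ₗ[Fqm] LinearMap.range B :=
      ((LinearEquiv.ofInjective A hA).trans (LinearEquiv.ofEq _ _ hAr)).symm.trans
        (LinearEquiv.ofInjective B hB)
    refine ⟨_, V, LinearMap.range B, φ, hV, ?_, hCV, ?_, rfl, ?_⟩
    · refine galoisClosed_of q m hmpos _ ?_
      rintro i _ ⟨x, rfl⟩
      exact ⟨qpowMap q i x, hBc i x⟩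
    · rintro _ ⟨x, _, rfl⟩
      exact (φ x).2
    · intro v
      obtain ⟨x, rfl⟩ :=
        ((LinearEquiv.ofInjective A hA).trans (LinearEquiv.ofEq _ _ hAr)).surjective v
      have h1 : ((φ (((LinearEquiv.ofInjective A hA).trans (LinearEquiv.ofEq _ _ hAr)) x) :
          LinearMap.range B) : Fin n' → Fqm) = B x := by
        change ((LinearEquiv.ofInjective B hB (((LinearEquiv.ofInjective A hA).trans
          (LinearEquiv.ofEq _ _ hAr)).symm (((LinearEquiv.ofInjective A hA).trans
          (LinearEquiv.ofEq _ _ hAr)) x)) : LinearMap.range B) : Fin n' → Fqm) = B x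
        rw [LinearEquiv.symm_apply_apply]
        rfl
      rw [h1]
      exact (wtRv_map q m B hB hBc x).trans (wtRv_map q m A hA hAc x).symm
  · rintro ⟨C', V, V', φ, hV, -, hCV, -, -, -⟩
    have h1 : dR q m C k ≤ finrank Fqm V :=
      Nat.sInf_le ⟨V, hV, by rw [inf_eq_left.2 hCV, hk], rfl⟩
    have h2 : finrank Fqm V' ≤ n' := by
      simpa using Submodule.finrank_le V'
    rw [φ.finrank_eq] at h1
    exact h1.trans h2

end RankPaper
end

section
/- For every F_{q^m}-linear code C ⊆ F_{q^m}^n of dimension k and every 1 ≤ r ≤ k − 1, one has 1 ≤ d_{R,r+1}(C) − d_{R,r}(C) ≤ m. -/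
open Submodule Module

namespace RankPaper

variable {n : ℕ}

theorem galoisClosed_iff {q m : ℕ} (hm : 0 < m) {Fqm : Type} [Field Fqm]
    (V : Submodule Fqm (Fin n → Fqm)) :
    GaloisClosed q m V ↔ ∀ i < m, ∀ v ∈ V, qpowMap q i v ∈ V := by
  unfold GaloisClosed galClosure
  constructor
  · intro h i hi v hv
    rw [← h]
    refine Submodule.subset_span ?_
    simp only [Set.mem_iUnion]
    exact ⟨i, Finset.mem_range.2 hi, v, hv, rfl⟩
  · intro h
    apply le_antisymm
    · rw [Submodule.span_le]
      intro x hx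
      simp only [Set.mem_iUnion] at hx
      obtain ⟨i, hi, v, hv, rfl⟩ := hx
      exact h i (Finset.mem_range.1 hi) v hv
    · intro v hv
      refine Submodule.subset_span ?_
      simp only [Set.mem_iUnion]
      refine ⟨0, Finset.mem_range.2 hm, v, hv, ?_⟩
      funext j
      simp [qpowMap]

theorem qpow_add {Fq Fqm : Type} [Field Fq] [Field Fqm] [Algebra Fq Fqm] [Finite Fq]
    (i : ℕ) (x y : Fqm) :
    (x + y) ^ (Nat.card Fq) ^ i = x ^ (Nat.card Fq) ^ i + y ^ (Nat.card Fq) ^ i := by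
  have := Fintype.ofFinite Fq
  obtain ⟨p, hp⟩ := CharP.exists Fq
  obtain ⟨s, hpp, hs⟩ := FiniteField.card Fq p
  have : Fact p.Prime := ⟨hpp⟩
  have : CharP Fqm p := charP_of_injective_algebraMap (algebraMap Fq Fqm).injective p
  rw [Nat.card_eq_fintype_card, hs, ← pow_mul]
  exact add_pow_char_pow x y _ _

theorem qpow_mod {Fq Fqm : Type} [Field Fq] [Field Fqm] [Algebra Fq Fqm] [Finite Fq]
    [Finite Fqm] (i : ℕ) (x : Fqm) :
    x ^ (Nat.card Fq) ^ i = x ^ (Nat.card Fq) ^ (i % finrank Fq Fqm) := by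
  have := Fintype.ofFinite Fqm
  have hc : Nat.card Fq ^ finrank Fq Fqm = Fintype.card Fqm := by
    rw [← Nat.card_eq_fintype_card, Module.natCard_eq_pow_finrank (K := Fq) (V := Fqm)]
  conv_lhs => rw [← Nat.mod_add_div i (finrank Fq Fqm), pow_add, pow_mul, pow_mul, hc,
    FiniteField.pow_card_pow]

theorem closed_sup {Fq Fqm : Type} [Field Fq] [Field Fqm] [Algebra Fq Fqm] [Finite Fq]
    [Finite Fqm] (V : Submodule Fqm (Fin n → Fqm)) (c : Fin n → Fqm)
    (hm : 0 < finrank Fq Fqm)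
    (hV : GaloisClosed (Nat.card Fq) (finrank Fq Fqm) V) :
    GaloisClosed (Nat.card Fq) (finrank Fq Fqm)
      (V ⊔ Submodule.span Fqm
        (Set.range fun i : Fin (finrank Fq Fqm) => qpowMap (Nat.card Fq) i c)) := by
  rw [galoisClosed_iff hm] at hV ⊢
  intro i hi v hv
  have hadd : ∀ x y : Fin n → Fqm, qpowMap (Nat.card Fq) i (x + y) =
      qpowMap (Nat.card Fq) i x + qpowMap (Nat.card Fq) i y := by
    intro x y
    funext j
    exact qpow_add i _ _
  obtain ⟨a, ha, b, hb, rfl⟩ := Submodule.mem_sup.1 hv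
  clear hv
  rw [hadd]
  refine Submodule.add_mem_sup (hV i hi a ha) ?_
  induction hb using Submodule.span_induction with
  | mem x hx =>
    obtain ⟨t, rfl⟩ := hx
    refine Submodule.subset_span ⟨⟨(t + i) % finrank Fq Fqm, Nat.mod_lt _ hm⟩, ?_⟩
    funext j
    simp only [qpowMap]
    rw [← qpow_mod, pow_add, pow_mul]
  | zero =>
    have : qpowMap (Nat.card Fq) i (0 : Fin n → Fqm) = 0 := by
      funext j
      have : (Nat.card Fq) ^ i ≠ 0 := pow_ne_zero _ Nat.card_pos.ne'
      exact zero_pow this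
    rw [this]
    exact Submodule.zero_mem _
  | add x y _ _ hx hy =>
    rw [hadd]
    exact Submodule.add_mem _ hx hy
  | smul s x _ hx =>
    have : qpowMap (Nat.card Fq) i (s • x) =
        s ^ (Nat.card Fq) ^ i • qpowMap (Nat.card Fq) i x := by
      funext j
      simp [qpowMap, mul_pow]
    rw [this]
    exact Submodule.smul_mem _ _ hx

/-- for every linear code of dimension `k` and `1 ≤ r ≤ k − 1`,
`1 ≤ d_{R,r+1}(C) − d_{R,r}(C) ≤ m`. -/
theorem stmt10 (q m n k r : ℕ) (Fq Fqm : Type) [Field Fq] [Field Fqm] [Algebra Fq Fqm]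
    [Finite Fqm] (hq : Nat.card Fq = q) (hm : finrank Fq Fqm = m)
    (C : Submodule Fqm (Fin n → Fqm)) (hk : finrank Fqm C = k)
    (hr1 : 1 ≤ r) (hrk : r + 1 ≤ k) :
    dR q m C r + 1 ≤ dR q m C (r + 1) ∧ dR q m C (r + 1) ≤ dR q m C r + m := by
  have hfin : Finite Fq := Finite.of_injective _ (algebraMap Fq Fqm).injective
  have hm0 : 0 < finrank Fq Fqm := Module.finrank_pos
  subst hq hm
  have hne : ∀ s ≤ k, { dv | ∃ V : Submodule Fqm (Fin n → Fqm),
      GaloisClosed (Nat.card Fq) (finrank Fq Fqm) V ∧ s ≤ finrank Fqm ↥(C ⊓ V) ∧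
        dv = finrank Fqm ↥V }.Nonempty := by
    intro s hs
    refine ⟨_, ⊤, ?_, ?_, rfl⟩
    · rw [galoisClosed_iff hm0]
      intros
      trivial
    · rw [inf_top_eq, hk]
      exact hs
  constructor
  · obtain ⟨V, hV, hd, he⟩ := Nat.sInf_mem (hne (r + 1) hrk)
    change dR _ _ C (r + 1) = _ at he
    rw [he]
    obtain ⟨j, hj⟩ : ∃ j, ∃ v ∈ V, v j ≠ 0 := by
      by_contra! hcon
      have hb : V = ⊥ := by
        rw [Submodule.eq_bot_iff]
        intro v hv
        funext j
        exact hcon j v hv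
      rw [hb, inf_bot_eq, finrank_bot] at hd
      omega
    obtain ⟨v, hv, hvj⟩ := hj
    let H : Submodule Fqm (Fin n → Fqm) := LinearMap.ker (LinearMap.proj j)
    have hHm : ∀ x, x ∈ H ↔ x j = 0 := fun x => by simp [H]
    have hlt : finrank Fqm ↥(V ⊓ H) < finrank Fqm V := by
      apply Submodule.finrank_lt_finrank_of_lt
      refine lt_of_le_of_ne inf_le_left ?_
      intro h
      rw [← h] at hv
      exact hvj ((hHm v).1 hv.2)
    have hH : n ≤ finrank Fqm H + 1 := by
      have h1 := LinearMap.finrank_range_add_finrank_ker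
        (LinearMap.proj j : (Fin n → Fqm) →ₗ[Fqm] Fqm)
      have h2 := Submodule.finrank_le
        (LinearMap.range (LinearMap.proj j : (Fin n → Fqm) →ₗ[Fqm] Fqm))
      simp only [finrank_self, finrank_fin_fun] at h1 h2
      change _ + finrank Fqm H = n at h1
      omega
    have hCW : r ≤ finrank Fqm ↥(C ⊓ (V ⊓ H)) := by
      rw [← inf_assoc]
      have h1 := Submodule.finrank_sup_add_finrank_inf_eq (C ⊓ V) H
      have h2 := Submodule.finrank_le ((C ⊓ V) ⊔ H)
      rw [finrank_fin_fun] at h2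
      omega
    have hW : GaloisClosed (Nat.card Fq) (finrank Fq Fqm) (V ⊓ H) := by
      rw [galoisClosed_iff hm0] at hV ⊢
      intro i hi x hx
      refine ⟨hV i hi x hx.1, ?_⟩
      rw [SetLike.mem_coe, hHm]
      have h0 : x j = 0 := (hHm x).1 hx.2
      have h1 : (Nat.card Fq) ^ i ≠ 0 := pow_ne_zero _ Nat.card_pos.ne'
      change x j ^ _ = 0
      rw [h0, zero_pow h1]
    have : dR (Nat.card Fq) (finrank Fq Fqm) C r ≤ finrank Fqm ↥(V ⊓ H) :=
      Nat.sInf_le ⟨_, hW, hCW, rfl⟩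
    omega
  · obtain ⟨V, hV, hd, he⟩ := Nat.sInf_mem (hne r (by omega))
    change dR _ _ C r = _ at he
    rw [he]
    by_cases hbig : r + 1 ≤ finrank Fqm ↥(C ⊓ V)
    · have : dR (Nat.card Fq) (finrank Fq Fqm) C (r + 1) ≤ finrank Fqm V :=
        Nat.sInf_le ⟨V, hV, hbig, rfl⟩
      omega
    · obtain ⟨c, hc, hcV⟩ : ∃ c ∈ C, c ∉ V := by
        by_contra! hcon
        have : C ⊓ V = C := inf_eq_left.2 hcon
        rw [this] at hbig
        omega
      have hcl := closed_sup V c hm0 hV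
      set S := Submodule.span Fqm
        (Set.range fun i : Fin (finrank Fq Fqm) => qpowMap (Nat.card Fq) i c) with hS
      have hSd : finrank Fqm S ≤ finrank Fq Fqm := by
        have := finrank_range_le_card (R := Fqm)
          (fun i : Fin (finrank Fq Fqm) => qpowMap (Nat.card Fq) i c)
        simpa [Set.finrank] using this
      have hcS : c ∈ S := by
        refine Submodule.subset_span ⟨⟨0, hm0⟩, ?_⟩
        funext j
        simp [qpowMap]
      have hlt : finrank Fqm ↥(C ⊓ V) < finrank Fqm ↥(C ⊓ (V ⊔ S)) := by
        apply Submodule.finrank_lt_finrank_of_lt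
        refine lt_of_le_of_ne (inf_le_inf_left _ le_sup_left) ?_
        intro h
        have : c ∈ C ⊓ (V ⊔ S) := ⟨hc, Submodule.mem_sup_right hcS⟩
        rw [← h] at this
        exact hcV this.2
      have h1 : dR (Nat.card Fq) (finrank Fq Fqm) C (r + 1) ≤ finrank Fqm ↥(V ⊔ S) :=
        Nat.sInf_le ⟨_, hcl, by omega, rfl⟩
      have h2 := Submodule.finrank_add_le_finrank_add_finrank V S
      omega

end RankPaper
end
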